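/- Suppose given abelian groups M^i, M'^i, N^i, N'^i for every integer i, all of which are zero for i < 0, group homomorphisms φ^i : M^i → N^i and φ'^i : M'^i → N'^i, and for every integer s homomorphisms α^s : M^s → M'^s, β^s : M'^s → M^{s-1}, γ^s : M^{s-1} → M^{s+1} (and similarly ᾱ^s : N^s → N'^s, β̄^s : N'^s → N^{s-1}, γ̄^s : N^{s-1} → N^{s+1}) forming long exact sequences ⋯ → M'^{s-1} → M^{s-2} → M^s → M'^s → M^{s-1} → M^{s+1} → ⋯ (exactness at M^s means im γ^{s-1} = ker α^s, exactness at M'^s means im α^s = ker β^s, exactness at M^{s-1} means im β^s = ker γ^s; similarly for the N-sequence). Assume all maps are compatible: φ' ∘ α = ᾱ ∘ φ, φ ∘ β = β̄ ∘ φ', φ ∘ γ = γ̄ ∘ φ in every degree. Then for every integer w, the family (φ^i) is w-connected if and only if the family (φ'^i) is w-connected. -/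

import Mathlib

/-- given two compatible long exact "Gysin-type" sequences
`⋯ → M'^{s-1} → M^{s-2} → M^s → M'^s → M^{s-1} → M^{s+1} → ⋯` (and likewise for `N`),
with all groups vanishing in negative degrees, the family `(φ^i)` is `w`-connected iff
`(φ'^i)` is.  Here the maps are re-indexed so that `β s : M'^{s+1} →+ M s` corresponds to
`β^{s+1}` and `γ s : M^s →+ M^{s+2}` corresponds to `γ^{s+1}`. -/
theorem stmt2
    (M M' N N' : ℤ → Type*)
    [∀ i, AddCommGroup (M i)] [∀ i, AddCommGroup (M' i)]
    [∀ i, AddCommGroup (N i)] [∀ i, AddCommGroup (N' i)]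
    (hM : ∀ i < (0 : ℤ), Subsingleton (M i)) (hM' : ∀ i < (0 : ℤ), Subsingleton (M' i))
    (hN : ∀ i < (0 : ℤ), Subsingleton (N i)) (hN' : ∀ i < (0 : ℤ), Subsingleton (N' i))
    (φ : ∀ i, M i →+ N i) (φ' : ∀ i, M' i →+ N' i)
    (α : ∀ s, M s →+ M' s) (β : ∀ s, M' (s + 1) →+ M s) (γ : ∀ s, M s →+ M (s + 2))
    (α' : ∀ s, N s →+ N' s) (β' : ∀ s, N' (s + 1) →+ N s) (γ' : ∀ s, N s →+ N (s + 2))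
    (hex1 : ∀ s : ℤ, Function.Exact (γ s) (α (s + 2)))
    (hex2 : ∀ s : ℤ, Function.Exact (α (s + 1)) (β s))
    (hex3 : ∀ s : ℤ, Function.Exact (β s) (γ s))
    (hex1' : ∀ s : ℤ, Function.Exact (γ' s) (α' (s + 2)))
    (hex2' : ∀ s : ℤ, Function.Exact (α' (s + 1)) (β' s))
    (hex3' : ∀ s : ℤ, Function.Exact (β' s) (γ' s))
    (hcα : ∀ (s : ℤ) (x : M s), φ' s (α s x) = α' s (φ s x))
    (hcβ : ∀ (s : ℤ) (x : M' (s + 1)), φ s (β s x) = β' s (φ' (s + 1) x))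
    (hcγ : ∀ (s : ℤ) (x : M s), φ (s + 2) (γ s x) = γ' s (φ s x))
    (w : ℤ) :
    ((∀ i < w, Function.Bijective (φ i)) ∧ Function.Injective (φ w)) ↔
      ((∀ i < w, Function.Bijective (φ' i)) ∧ Function.Injective (φ' w)) := by
  have cα (s : ℤ) : (α' s).comp (φ s) = (φ' s).comp (α s) :=
    AddMonoidHom.ext fun x => (hcα s x).symm
  have cβ (s : ℤ) : (β' s).comp (φ' (s + 1)) = (φ s).comp (β s) :=
    AddMonoidHom.ext fun x => (hcβ s x).symm
  have cγ (s : ℤ) : (γ' s).comp (φ s) = (φ (s + 2)).comp (γ s) :=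
    AddMonoidHom.ext fun x => (hcγ s x).symm
  -- `t + 2` and `t + 1 + 1` are not definitionally equal, so `β (t + 1)` is transported.
  have transport (s u : ℤ) (hu : u = s + 1) :
      ∃ (b : M' u →+ M s) (b' : N' u →+ N s), Function.Exact (α u) b ∧ Function.Exact b (γ s) ∧
        Function.Exact (α' u) b' ∧ Function.Exact b' (γ' s) ∧
        b'.comp (φ' u) = (φ s).comp b := by
    subst hu
    exact ⟨β s, β' s, hex2 s, hex3 s, hex2' s, hex3' s, cβ s⟩
  have injective_φ' (t : ℤ) (h₁ : Function.Surjective (φ t))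
      (h₂ : Function.Injective (φ (t + 2))) (h₃ : Function.Injective (φ (t + 1))) :
      Function.Injective (φ' (t + 2)) := by
    obtain ⟨b, b', e₁, -, -, -, c⟩ := transport (t + 1) (t + 2) (by ring)
    exact AddMonoidHom.injective_of_surjective_of_injective_of_injective _ _ b _ _ b' _ _ _ _
      (cγ t) (cα _) c (hex1 t) e₁ (hex1' t) h₁ h₂ h₃
  have surjective_φ' (t : ℤ) (h₁ : Function.Surjective (φ (t + 2)))
      (h₂ : Function.Surjective (φ (t + 1))) (h₃ : Function.Injective (φ (t + 1 + 2))) :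
      Function.Surjective (φ' (t + 2)) := by
    obtain ⟨b, b', -, e₂, e₁', e₂', c⟩ := transport (t + 1) (t + 2) (by ring)
    exact AddMonoidHom.surjective_of_surjective_of_surjective_of_injective _ b _ _ b' _ _ _ _ _
      (cα _) c (cγ _) e₂ e₁' e₂' h₁ h₂ h₃
  have injective_φ (t : ℤ) (h₁ : Function.Surjective (φ' (t + 1)))
      (h₂ : Function.Injective (φ t)) (h₃ : Function.Injective (φ' (t + 2))) :
      Function.Injective (φ (t + 2)) :=
    AddMonoidHom.injective_of_surjective_of_injective_of_injective _ _ _ _ _ _ _ _ _ _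
      (cβ t) (cγ t) (cα _) (hex3 t) (hex1 t) (hex3' t) h₁ h₂ h₃
  have surjective_φ (t : ℤ) (h₁ : Function.Surjective (φ t))
      (h₂ : Function.Surjective (φ' (t + 2))) (h₃ : Function.Injective (φ (t + 1))) :
      Function.Surjective (φ (t + 2)) := by
    obtain ⟨b, b', e₁, -, e₁', -, c⟩ := transport (t + 1) (t + 2) (by ring)
    exact AddMonoidHom.surjective_of_surjective_of_surjective_of_injective _ _ b _ _ b' _ _ _ _
      (cγ t) (cα _) c e₁ (hex1' t) e₁' h₁ h₂ h₃
  constructor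
  · rintro ⟨hb, hw⟩
    have inj (i : ℤ) (hi : i ≤ w) : Function.Injective (φ i) := by
      rcases hi.lt_or_eq with h | rfl
      exacts [(hb i h).1, hw]
    have inj' (i : ℤ) (hi : i ≤ w) : Function.Injective (φ' i) := by
      obtain ⟨t, rfl⟩ : ∃ t, i = t + 2 := ⟨i - 2, by ring⟩
      exact injective_φ' t (hb _ (by lia)).2 (inj _ hi) (inj _ (by lia))
    refine ⟨fun i hi => ⟨inj' i hi.le, ?_⟩, inj' w le_rfl⟩
    obtain ⟨t, rfl⟩ : ∃ t, i = t + 2 := ⟨i - 2, by ring⟩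
    exact surjective_φ' t (hb _ hi).2 (hb _ (by lia)).2 (inj _ (by lia))
  · rintro ⟨hb, hw⟩
    have inj' (i : ℤ) (hi : i ≤ w) : Function.Injective (φ' i) := by
      rcases hi.lt_or_eq with h | rfl
      exacts [(hb i h).1, hw]
    have key (n : ℕ) : ∀ i < (n : ℤ), (i ≤ w → Function.Injective (φ i)) ∧
        (i < w → Function.Surjective (φ i)) := by
      induction n with
      | zero =>
        intro i hi
        have := hM i (by simpa using hi)
        have := hN i (by simpa using hi)
        exact ⟨fun _ => Function.injective_of_subsingleton _,
          fun _ => Function.surjective_to_subsingleton _⟩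
      | succ n ih =>
        intro i hi
        obtain ⟨t, rfl⟩ : ∃ t, i = t + 2 := ⟨i - 2, by ring⟩
        obtain ⟨inj₀, surj₀⟩ := ih t (by lia)
        obtain ⟨inj₁, -⟩ := ih (t + 1) (by lia)
        exact ⟨fun h => injective_φ t (hb _ (by lia)).2 (inj₀ (by lia)) (inj' _ h),
          fun h => surjective_φ t (surj₀ (by lia)) (hb _ h).2 (inj₁ (by lia))⟩
    have conn (i : ℤ) := key (i.toNat + 1) i (by lia)
    exact ⟨fun i hi => ⟨(conn i).1 hi.le, (conn i).2 hi⟩, (conn w).1 le_rfl⟩
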